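/- Let 𝔠 be a W-invariant homogeneous ideal of C with Δ ∉ 𝔠. Assume the graded ℚ-algebra C/𝔠 is finite-dimensional, that its top nonzero degree is L with dim_ℚ (C/𝔠)_L = 1, that for every 0 ≤ i ≤ L the multiplication pairing (C/𝔠)_i × (C/𝔠)_{L−i} → (C/𝔠)_L is a perfect pairing of ℚ-vector spaces, and that W acts trivially on (C/𝔠)_L. Set r := L − 2δ. Then the graded ring A/p(𝔠) satisfies: (A/p(𝔠))_i = 0 for i > r, dim_ℚ (A/p(𝔠))_r = 1, and for every 0 ≤ i ≤ r the multiplication pairing (A/p(𝔠))_i × (A/p(𝔠))_{r−i} → (A/p(𝔠))_r is perfect. -/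

import Mathlib

/-!
For an invariant `a`, averaging shows that `a ∈ p(𝔠)` if and only if `Δ a ∈ 𝔠`, so multiplication
by `Δ` embeds `A/p(𝔠)` into `C/𝔠`. If `Δ a ∉ 𝔠`, Poincaré duality for `C/𝔠` gives `g` with
`Δ a g ∉ 𝔠` in the top degree. Since `W` acts trivially there,
`Δ² a p(g) = Δ a ∑ sign(w) w(g) = ∑ w(Δ a g)` is a nonzero multiple of `Δ a g` modulo `𝔠`, so `p(g)`
is a partner of `a` for the pairing `(a, b) ↦ Δ² a b` on `A/p(𝔠)`, whose top degree is `L - 2δ`.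
-/

open MvPolynomial

set_option maxHeartbeats 1000000
set_option synthInstance.maxHeartbeats 400000

/-- The index set of the variables `t_{i,ν}`, `i ∈ Q₀`, `1 ≤ ν ≤ d_i`. -/
abbrev Vars {Q₀ : Type} (d : Q₀ → ℕ) : Type := Σ i : Q₀, Fin (d i)

/-- The polynomial ring `C = ℚ[t_{i,ν}]`. -/
abbrev CRing {Q₀ : Type} (d : Q₀ → ℕ) : Type := MvPolynomial (Vars d) ℚ

/-- The group `W = ∏_i S_{d_i}`. -/
abbrev Wgrp {Q₀ : Type} (d : Q₀ → ℕ) : Type := ∀ i : Q₀, Equiv.Perm (Fin (d i))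

/-- The action of `w ∈ W` on `C` by `w·t_{i,ν} = t_{i,w_i(ν)}`. -/
noncomputable def wAct {Q₀ : Type} (d : Q₀ → ℕ) (w : Wgrp d) : CRing d →ₐ[ℚ] CRing d :=
  MvPolynomial.rename (fun x => ⟨x.1, w x.1 x.2⟩)

/-- The sign `sign(w) = ∏_i sign(w_i)` of `w ∈ W`, as a rational number. -/
def wSgn {Q₀ : Type} [Fintype Q₀] (d : Q₀ → ℕ) (w : Wgrp d) : ℚ :=
  ∏ i : Q₀, ((Equiv.Perm.sign (w i) : ℤ) : ℚ)

/-- The invariant ring `A = C^W`. -/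
noncomputable def Ainv {Q₀ : Type} (d : Q₀ → ℕ) : Subalgebra ℚ (CRing d) where
  carrier := {f | ∀ w : Wgrp d, wAct d w f = f}
  mul_mem' := by intro a b ha hb w; rw [map_mul, ha w, hb w]
  add_mem' := by intro a b ha hb w; rw [map_add, ha w, hb w]
  algebraMap_mem' := by intro r w; simp [wAct, MvPolynomial.algebraMap_eq]

noncomputable instance {Q₀ : Type} (d : Q₀ → ℕ) : Algebra (↥(Ainv d)) (CRing d) :=
  (Ainv d).toAlgebra

/-- The discriminant `Δ = ∏_i ∏_{μ<ν} (t_{i,ν} − t_{i,μ})`. -/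
noncomputable def Delta {Q₀ : Type} [Fintype Q₀] (d : Q₀ → ℕ) : CRing d :=
  ∏ i : Q₀, ∏ ν : Fin (d i), ∏ μ ∈ Finset.univ.filter (fun μ : Fin (d i) => μ < ν),
    (X (⟨i, ν⟩ : Vars d) - X (⟨i, μ⟩ : Vars d))

/-- `δ = deg Δ`. -/
noncomputable def deltaDeg {Q₀ : Type} [Fintype Q₀] (d : Q₀ → ℕ) : ℕ :=
  (Delta d).totalDegree

section GradedRing

variable {ι C S : Type*} [Semiring C] [SetLike S C] [AddSubmonoidClass S C] [DecidableEq ι]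

theorem mem_graded_of_mul_mem [AddLeftCancelMonoid ι] (𝒜 : ι → S) [GradedRing 𝒜] {m n : ι}
    {f g : C} (hreg : IsLeftRegular f) (hf : f ∈ 𝒜 m) (hfg : f * g ∈ 𝒜 (m + n)) : g ∈ 𝒜 n := by
  have hcomp : f * g = f * (DirectSum.decompose 𝒜 g n : C) := by
    rw [← DirectSum.coe_decompose_mul_add_of_left_mem 𝒜 hf,
      DirectSum.decompose_of_mem_same 𝒜 hfg]
  rw [hreg hcomp]
  exact SetLike.coe_mem _

theorem eq_zero_of_mul_mem_graded [AddCommMonoid ι] [PartialOrder ι] [CanonicallyOrderedAdd ι]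
    (𝒜 : ι → S) [GradedRing 𝒜] {m n : ι} {f g : C} (hreg : IsLeftRegular f) (hf : f ∈ 𝒜 m)
    (hfg : f * g ∈ 𝒜 n) (hmn : ¬m ≤ n) : g = 0 := by
  refine hreg.mul_left_eq_zero_iff.mp ?_
  rw [← DirectSum.decompose_of_mem_same 𝒜 hfg,
    DirectSum.coe_decompose_mul_of_left_mem_of_not_le 𝒜 hf hmn]

end GradedRing

section Antisymmetrize

variable {K C W : Type*} [CommSemiring K] [CommSemiring C] [Algebra K C]

/-- `f` is anti-invariant, that is, transforms under the operators `ρ w` by the signs `ε w`. -/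
def IsAntiInvariant (ε : W → K) (ρ : W → C →ₐ[K] C) (f : C) : Prop :=
  ∀ w, ρ w f = ε w • f

theorem IsAntiInvariant.mul_of_invariant {ε : W → K} {ρ : W → C →ₐ[K] C} {f a : C}
    (hf : IsAntiInvariant ε ρ f) (ha : ∀ w, ρ w a = a) : IsAntiInvariant ε ρ (f * a) := fun w => by
  rw [map_mul, hf w, ha w, smul_mul_assoc]

variable [Fintype W]

/-- The antisymmetrization `f ↦ ∑ w, ε w • ρ w f`, which is `Δ * p f` in the notation
of the symmetrization map `p`. -/
def antisymmetrize (ε : W → K) (ρ : W → C →ₐ[K] C) : C →ₗ[K] C :=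
  ∑ w, ε w • (ρ w).toLinearMap

variable {ε : W → K} {ρ : W → C →ₐ[K] C}

theorem antisymmetrize_apply (f : C) : antisymmetrize ε ρ f = ∑ w, ε w • ρ w f := by
  simp [antisymmetrize]

theorem antisymmetrize_mem {V : Submodule K C} (hV : ∀ w, ∀ f ∈ V, ρ w f ∈ V) {f : C}
    (hf : f ∈ V) : antisymmetrize ε ρ f ∈ V := by
  rw [antisymmetrize_apply]
  exact V.sum_mem fun w _ => V.smul_mem _ (hV w f hf)

theorem IsAntiInvariant.antisymmetrize_eq {f : C} (hf : IsAntiInvariant ε ρ f)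
    (hε : ∀ w, ε w * ε w = 1) : antisymmetrize ε ρ f = (Fintype.card W : K) • f := by
  have hterm (w : W) : ε w • ρ w f = f := by rw [hf w, smul_smul, hε, one_smul]
  simp only [antisymmetrize_apply, hterm, Finset.sum_const, Finset.card_univ,
    Nat.cast_smul_eq_nsmul]

theorem IsAntiInvariant.mul_antisymmetrize {f : C} (hf : IsAntiInvariant ε ρ f) (g : C) :
    f * antisymmetrize ε ρ g = ∑ w, ρ w (f * g) := by
  rw [antisymmetrize_apply, Finset.mul_sum]
  refine Finset.sum_congr rfl fun w _ => ?_
  rw [map_mul, hf w, smul_mul_assoc, mul_smul_comm]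

end Antisymmetrize

theorem mem_of_sum_mem_of_sub_mem {K M W : Type*} [DivisionRing K] [AddCommGroup M] [Module K M]
    [Fintype W] [NeZero (Fintype.card W : K)] {V : Submodule K M} {f : M} {g : W → M}
    (hg : ∀ w, g w - f ∈ V) (hsum : ∑ w, g w ∈ V) : f ∈ V := by
  have hdiff : ∑ w, (g w - f) ∈ V := V.sum_mem fun w _ => hg w
  rw [Finset.sum_sub_distrib, V.sub_mem_iff_right hsum, Finset.sum_const, Finset.card_univ,
    ← Nat.cast_smul_eq_nsmul K] at hdiff
  exact (V.smul_mem_iff (NeZero.ne _)).mp hdiff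

/-- Poincaré duality in degree `r` for the quotient of a graded ring, with pieces `𝒜 n`, by `I`.
The pieces need not exhaust the ambient ring `C`, so that graded subrings of `C` are covered.
Perfectness of the pairing is encoded as nondegeneracy in the left argument for all `i ≤ r`:
exchanging `i` and `r - i` gives nondegeneracy in the right one, and for finite-dimensional pieces
of the quotient this amounts to perfectness, as the pairing takes values in a line. -/
structure HasPoincareDuality {K C S : Type*} [Field K] [CommRing C] [Algebra K C] [SetLike S C]
    (𝒜 : ℕ → Submodule K C) (I : S) (r : ℕ) : Prop where
  mem_of_lt : ∀ n, r < n → ∀ f ∈ 𝒜 n, f ∈ I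
  exists_generator : ∃ f₀ ∈ 𝒜 r, f₀ ∉ I ∧ ∀ g ∈ 𝒜 r, ∃ c : K, g - c • f₀ ∈ I
  exists_mul_notMem : ∀ i ≤ r, ∀ f ∈ 𝒜 i, f ∉ I → ∃ g ∈ 𝒜 (r - i), f * g ∉ I

section Duality

variable {K C W : Type*} [Field K] [CommRing C] [Algebra K C]

theorem HasPoincareDuality.exists_sub_smul_mem {𝒜 : ℕ → Submodule K C} {I : Ideal C} {r : ℕ}
    (h : HasPoincareDuality 𝒜 I r) {f g : C} (hf : f ∈ 𝒜 r) (hfI : f ∉ I) (hg : g ∈ 𝒜 r) :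
    ∃ c : K, g - c • f ∈ I := by
  obtain ⟨f₀, -, -, hgen⟩ := h.exists_generator
  obtain ⟨a, ha⟩ := hgen f hf
  obtain ⟨b, hb⟩ := hgen g hg
  have ha0 : a ≠ 0 := by
    rintro rfl
    exact hfI (by simpa using ha)
  refine ⟨b / a, ?_⟩
  have hsub : g - (b / a) • f = (g - b • f₀) - (b / a) • (f - a • f₀) := by
    rw [smul_sub, smul_smul, div_mul_cancel₀ b ha0, sub_sub_sub_cancel_right]
  rw [hsub]
  exact I.sub_mem hb (Submodule.smul_of_tower_mem I _ ha)

variable [Fintype W] {ε : W → K} {ρ : W → C →ₐ[K] C} {𝔠 : Ideal C} {Δ : C} {A : Subalgebra K C}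
  {p : C → C}

theorem mul_mem_of_mem_span_image (h𝔠 : ∀ w, ∀ f ∈ 𝔠, ρ w f ∈ 𝔠)
    (hp : ∀ f, Δ * p f = antisymmetrize ε ρ f) {x : C} (hx : x ∈ Submodule.span A (p '' 𝔠)) :
    Δ * x ∈ 𝔠 := by
  induction hx using Submodule.span_induction with
  | mem x hx =>
    obtain ⟨f, hf, rfl⟩ := hx
    rw [hp]
    exact antisymmetrize_mem (V := 𝔠.restrictScalars K) h𝔠 hf
  | zero => simp only [mul_zero, zero_mem]
  | add x y _ _ hx hy => simpa only [mul_add] using 𝔠.add_mem hx hy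
  | smul s x _ hx => simpa only [mul_smul_comm] using Submodule.smul_of_tower_mem 𝔠 s hx

variable [NeZero (Fintype.card W : K)]

theorem mem_span_image_iff (hε : ∀ w, ε w * ε w = 1) (hΔ : IsAntiInvariant ε ρ Δ)
    (hreg : IsLeftRegular Δ) (h𝔠 : ∀ w, ∀ f ∈ 𝔠, ρ w f ∈ 𝔠)
    (hp : ∀ f, Δ * p f = antisymmetrize ε ρ f) {a : C} (ha : ∀ w, ρ w a = a) :
    a ∈ Submodule.span A (p '' 𝔠) ↔ Δ * a ∈ 𝔠 := by
  refine ⟨mul_mem_of_mem_span_image h𝔠 hp, fun h => ?_⟩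
  have hcard : (Fintype.card W : K) ≠ 0 := NeZero.ne _
  have hpre : p ((Fintype.card W : K)⁻¹ • (Δ * a)) = a := hreg <| show Δ * p _ = Δ * a by
    rw [hp, map_smul, (hΔ.mul_of_invariant ha).antisymmetrize_eq hε, inv_smul_smul₀ hcard]
  exact Submodule.subset_span ⟨_, Submodule.smul_of_tower_mem 𝔠 _ h, hpre⟩

theorem HasPoincareDuality.exists_mul_antisymmetrize_notMem {𝒜 : ℕ → Submodule K C}
    [SetLike.GradedMul 𝒜] {L n : ℕ} (hduality : HasPoincareDuality 𝒜 𝔠 L)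
    (htriv : ∀ f ∈ 𝒜 L, ∀ w, ρ w f - f ∈ 𝔠) {f : C} (hf : IsAntiInvariant ε ρ f)
    (hfn : f ∈ 𝒜 n) (hf𝔠 : f ∉ 𝔠) :
    n ≤ L ∧ ∃ g ∈ 𝒜 (L - n), f * antisymmetrize ε ρ g ∉ 𝔠 := by
  have hnL : n ≤ L := not_lt.mp fun hlt => hf𝔠 (hduality.mem_of_lt n hlt f hfn)
  obtain ⟨g, hg, hfg⟩ := hduality.exists_mul_notMem n hnL f hfn hf𝔠
  have hfgL : f * g ∈ 𝒜 L := Nat.add_sub_cancel' hnL ▸ SetLike.mul_mem_graded hfn hg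
  refine ⟨hnL, g, hg, fun hmem => hfg ?_⟩
  rw [hf.mul_antisymmetrize] at hmem
  exact mem_of_sum_mem_of_sub_mem (V := 𝔠.restrictScalars K) (htriv _ hfgL) hmem

variable {𝒜 : ℕ → Submodule K C} [GradedAlgebra 𝒜] {δ L : ℕ}

theorem HasPoincareDuality.exists_invariant_mul_notMem (hduality : HasPoincareDuality 𝒜 𝔠 L)
    (htriv : ∀ f ∈ 𝒜 L, ∀ w, ρ w f - f ∈ 𝔠) (hρ : ∀ n w, ∀ f ∈ 𝒜 n, ρ w f ∈ 𝒜 n)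
    (hΔ : IsAntiInvariant ε ρ Δ) (hreg : IsLeftRegular Δ) (hΔδ : Δ ∈ 𝒜 δ)
    (hp : ∀ f, Δ * p f = antisymmetrize ε ρ f) (hpA : ∀ f, p f ∈ A)
    {i : ℕ} {a : C} (ha : ∀ w, ρ w a = a) (hai : a ∈ 𝒜 i) (hΔa : Δ * a ∉ 𝔠) :
    i + 2 * δ ≤ L ∧ ∃ b ∈ A.toSubmodule ⊓ 𝒜 (L - 2 * δ - i), Δ * Δ * (a * b) ∉ 𝔠 := by
  obtain ⟨hle, g, hg, hag⟩ := hduality.exists_mul_antisymmetrize_notMem htriv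
    (hΔ.mul_of_invariant ha) (SetLike.mul_mem_graded hΔδ hai) hΔa
  rw [← hp, mul_mul_mul_comm] at hag
  have hΔp : Δ * p g ∈ 𝒜 (L - (δ + i)) := hp g ▸ antisymmetrize_mem (hρ _) hg
  have hδ : δ ≤ L - (δ + i) := by
    by_contra hlt
    exact hag (by simp [eq_zero_of_mul_mem_graded 𝒜 hreg hΔδ hΔp hlt])
  have hdeg : L - (δ + i) = δ + (L - 2 * δ - i) := by omega
  exact ⟨by omega, p g, ⟨hpA g, mem_graded_of_mul_mem 𝒜 hreg hΔδ (hdeg ▸ hΔp)⟩, hag⟩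

theorem stmt8_general (hduality : HasPoincareDuality 𝒜 𝔠 L)
    (htriv : ∀ f ∈ 𝒜 L, ∀ w, ρ w f - f ∈ 𝔠) (hρ : ∀ n w, ∀ f ∈ 𝒜 n, ρ w f ∈ 𝒜 n)
    (hε : ∀ w, ε w * ε w = 1) (hΔ : IsAntiInvariant ε ρ Δ) (hreg : IsLeftRegular Δ)
    (hΔδ : Δ ∈ 𝒜 δ) (hΔ𝔠 : Δ ∉ 𝔠) (h𝔠 : ∀ w, ∀ f ∈ 𝔠, ρ w f ∈ 𝔠)
    (hA : ∀ a ∈ A, ∀ w, ρ w a = a) (hp : ∀ f, Δ * p f = antisymmetrize ε ρ f)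
    (hpA : ∀ f, p f ∈ A) :
    HasPoincareDuality (fun n => A.toSubmodule ⊓ 𝒜 n) (Submodule.span A (p '' 𝔠))
      (L - 2 * δ) := by
  have hmem {a : C} (ha : a ∈ A) : a ∈ Submodule.span A (p '' 𝔠) ↔ Δ * a ∈ 𝔠 :=
    mem_span_image_iff hε hΔ hreg h𝔠 hp (hA a ha)
  have hpartner {i : ℕ} {a : C} (ha : a ∈ A) (hai : a ∈ 𝒜 i) (hΔa : Δ * a ∉ 𝔠) :=
    hduality.exists_invariant_mul_notMem htriv hρ hΔ hreg hΔδ hp hpA (hA a ha) hai hΔa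
  have hΔΔ {x : C} (hx : Δ * x ∈ 𝔠) : Δ * Δ * x ∈ 𝔠 := mul_assoc Δ Δ x ▸ 𝔠.mul_mem_left Δ hx
  refine ⟨fun i hi a ⟨ha, hai⟩ => ?_, ?_, fun i _ a ⟨ha, hai⟩ haJ => ?_⟩
  · rw [hmem ha]
    by_contra hΔa
    have := (hpartner ha hai hΔa).1
    omega
  · -- The subtraction in `L - 2 * δ` is not truncated, since `Δ * 1 ∉ 𝔠`.
    obtain ⟨hδL, a₀, ⟨ha₀, ha₀r⟩, hΔa₀⟩ :=
      hpartner A.one_mem SetLike.GradedOne.one_mem ((mul_one Δ).symm ▸ hΔ𝔠)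
    rw [one_mul] at hΔa₀
    refine ⟨a₀, ⟨ha₀, ha₀r⟩, fun h => hΔa₀ (hΔΔ ((hmem ha₀).mp h)), fun a ⟨ha, har⟩ => ?_⟩
    have htop {x : C} (hx : x ∈ 𝒜 (L - 2 * δ)) : Δ * Δ * x ∈ 𝒜 L := by
      have hdeg : δ + δ + (L - 2 * δ) = L := by omega
      exact hdeg ▸ SetLike.mul_mem_graded (SetLike.mul_mem_graded hΔδ hΔδ) hx
    obtain ⟨c, hc⟩ := hduality.exists_sub_smul_mem (htop ha₀r) hΔa₀ (htop har)
    rw [← mul_smul_comm, ← mul_sub] at hc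
    have hsubA : a - c • a₀ ∈ A := A.sub_mem ha (A.smul_mem ha₀ c)
    refine ⟨c, (hmem hsubA).mpr ?_⟩
    by_contra hΔsub
    obtain ⟨-, b, -, hb⟩ := hpartner hsubA (sub_mem har (Submodule.smul_mem _ c ha₀r)) hΔsub
    exact hb (mul_assoc (Δ * Δ) _ b ▸ 𝔠.mul_mem_right b hc)
  · obtain ⟨-, b, hb, hab⟩ := hpartner ha hai (mt (hmem ha).mpr haJ)
    exact ⟨b, hb, fun h => hab (hΔΔ ((hmem (A.mul_mem ha hb.1)).mp h))⟩

end Duality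

section Delta

variable {Q₀ : Type} [Fintype Q₀] (d : Q₀ → ℕ)

theorem Delta_ne_zero : Delta d ≠ 0 := by
  refine Finset.prod_ne_zero_iff.mpr fun i _ => Finset.prod_ne_zero_iff.mpr fun ν _ =>
    Finset.prod_ne_zero_iff.mpr fun μ hμ => sub_ne_zero.mpr fun h => ?_
  have hνμ : ν = μ := by simpa using X_injective h
  simp [hνμ] at hμ

theorem Delta_isHomogeneous : (Delta d).IsHomogeneous (deltaDeg d) := by
  have hhom : (Delta d).IsHomogeneous (∑ i : Q₀, ∑ ν : Fin (d i), ∑ _μ with _μ < ν, 1) :=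
    .prod _ _ _ fun i _ => .prod _ _ _ fun ν _ => .prod _ _ _ fun μ _ =>
      (isHomogeneous_X _ _).sub (isHomogeneous_X _ _)
  rwa [deltaDeg, hhom.totalDegree (Delta_ne_zero d)]

theorem Delta_isAntiInvariant : IsAntiInvariant (wSgn d) (wAct d) (Delta d) := by
  intro w
  rw [wAct, wSgn, Delta, smul_eq_C_mul, map_prod, map_prod, ← Finset.prod_mul_distrib]
  refine Finset.prod_congr rfl fun i _ => ?_
  have hsign := (w i).prod_Iio_comp_eq_sign_mul_prod
    (f := fun μ ν => (X ⟨i, ν⟩ - X ⟨i, μ⟩ : CRing d)) (fun _ _ => by ring)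
  simp only [Finset.filter_gt_eq_Iio, map_prod, map_sub, rename_X, hsign, map_intCast]

theorem wSgn_mul_self (w : Wgrp d) : wSgn d w * wSgn d w = 1 := by
  rw [wSgn, ← Finset.prod_mul_distrib]
  refine Finset.prod_eq_one fun i _ => ?_
  rw [← Int.cast_mul, ← Units.val_mul, Int.units_mul_self, Units.val_one, Int.cast_one]

end Delta

/-- Poincaré duality descends from `C/𝔠` to `A/p(𝔠)`:
if `C/𝔠` is a finite-dimensional graded ring with top degree `L`, one-dimensional
top piece, perfect multiplication pairings, trivial `W`-action on the top piece,
and `Δ ∉ 𝔠`, then `A/p(𝔠)` vanishes above `r = L − 2δ`, is one-dimensional in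
degree `r`, and has perfect multiplication pairings
`(A/p(𝔠))_i × (A/p(𝔠))_{r−i} → (A/p(𝔠))_r`. -/
theorem stmt8 {Q₀ : Type} [Fintype Q₀] [DecidableEq Q₀] (d : Q₀ → ℕ) (hd : ∀ i, 0 < d i)
    (𝔠 : Ideal (CRing d))
    (hWinv : ∀ (w : Wgrp d), ∀ f ∈ 𝔠, wAct d w f ∈ 𝔠)
    (hHomog : ∀ f ∈ 𝔠, ∀ n : ℕ, MvPolynomial.homogeneousComponent n f ∈ 𝔠)
    (hΔ : Delta d ∉ 𝔠)
    -- the symmetrization map `p`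
    (p : CRing d → CRing d)
    (hp : ∀ f : CRing d, Delta d * p f = ∑ w : Wgrp d, wSgn d w • wAct d w f)
    (hpA : ∀ f : CRing d, p f ∈ Ainv d)
    (L : ℕ)
    -- `C/𝔠` is finite dimensional with top nonzero degree `L`:
    (hTop : ∀ n : ℕ, L < n → ∀ f : CRing d, f.IsHomogeneous n → f ∈ 𝔠)
    -- `dim_ℚ (C/𝔠)_L = 1`:
    (hOneDim : ∃ f₀ : CRing d, f₀.IsHomogeneous L ∧ f₀ ∉ 𝔠 ∧
      ∀ g : CRing d, g.IsHomogeneous L → ∃ c : ℚ, g - c • f₀ ∈ 𝔠)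
    -- the multiplication pairing `(C/𝔠)_i × (C/𝔠)_{L−i} → (C/𝔠)_L` is perfect:
    (hPerfect : ∀ i : ℕ, i ≤ L → ∀ f : CRing d, f.IsHomogeneous i → f ∉ 𝔠 →
      ∃ g : CRing d, g.IsHomogeneous (L - i) ∧ f * g ∉ 𝔠)
    -- `W` acts trivially on `(C/𝔠)_L`:
    (hWTop : ∀ f : CRing d, f.IsHomogeneous L → ∀ w : Wgrp d, wAct d w f - f ∈ 𝔠) :
    -- `(A/p(𝔠))_i = 0` for `i > r := L − 2δ`:
    (∀ i : ℕ, L - 2 * deltaDeg d < i → ∀ a : CRing d, a ∈ Ainv d → a.IsHomogeneous i →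
      a ∈ Submodule.span ↥(Ainv d) (p '' 𝔠)) ∧
    -- `dim_ℚ (A/p(𝔠))_r = 1`:
    (∃ a₀ : CRing d, a₀ ∈ Ainv d ∧ a₀.IsHomogeneous (L - 2 * deltaDeg d) ∧
      a₀ ∉ Submodule.span ↥(Ainv d) (p '' 𝔠) ∧
      ∀ a : CRing d, a ∈ Ainv d → a.IsHomogeneous (L - 2 * deltaDeg d) →
        ∃ c : ℚ, a - c • a₀ ∈ Submodule.span ↥(Ainv d) (p '' 𝔠)) ∧
    -- the pairing `(A/p(𝔠))_i × (A/p(𝔠))_{r−i} → (A/p(𝔠))_r` is perfect: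
    (∀ i : ℕ, i ≤ L - 2 * deltaDeg d → ∀ a : CRing d, a ∈ Ainv d → a.IsHomogeneous i →
      a ∉ Submodule.span ↥(Ainv d) (p '' 𝔠) →
      ∃ b : CRing d, b ∈ Ainv d ∧ b.IsHomogeneous (L - 2 * deltaDeg d - i) ∧
        a * b ∉ Submodule.span ↥(Ainv d) (p '' 𝔠)) := by
  let := gradedAlgebra (σ := Vars d) (R := ℚ)
  obtain ⟨hvanish, hgen, hpair⟩ := stmt8_general
    (𝒜 := homogeneousSubmodule (Vars d) ℚ) (A := Ainv d)
    ⟨hTop, hOneDim, hPerfect⟩ hWTop (fun _ _ _ => IsHomogeneous.rename_isHomogeneous)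
    (wSgn_mul_self d) (Delta_isAntiInvariant d) (IsRegular.of_ne_zero (Delta_ne_zero d)).left
    (Delta_isHomogeneous d) hΔ hWinv (fun _ ha => ha)
    (fun f => (hp f).trans (antisymmetrize_apply f).symm) hpA
  simp only [Submodule.mem_inf, and_imp, and_assoc] at hvanish hgen hpair
  exact ⟨hvanish, hgen, hpair⟩
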